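/- Let E be a non-reflexive Banach space. Then the evaluation map from E × ℝ (with the ℓ∞ norm, ordered by the cone {(x,λ) : ‖x‖ ≤ λ}) into the space of Scott-continuous states on its dual order-unit space OU(E*) is not surjective: there exists a Scott-continuous state on OU(E*) that does not equal ev(x,λ) ∘ lev for any (x,λ) ∈ E × ℝ. -/

import Mathlib

/-- The order on `OU(E*) = E* × ℝ` induced by the cone `{(y,μ) : ‖y‖ ≤ μ}`. -/
def OUle {E : Type*} [NormedAddCommGroup E] [NormedSpace ℝ E]
    (a b : (E →L[ℝ] ℝ) × ℝ) : Prop := ‖b.1 - a.1‖ ≤ b.2 - a.2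

/-! In a directed set with a supremum the heights `μ` of the elements `(y, μ)` are bounded, and an
element whose height is almost maximal dominates the whole set up to a small multiple of the order
unit. Hence the supremum is approximated from within the set up to the order unit, and *every*
positive functional is Scott-continuous. It remains to produce a state which is not an evaluation:
a functional `ψ` on `E*` of norm at most one gives the state `(y, μ) ↦ ψ y + μ`, and we may choose
`ψ` outside the image of `E`. -/

/-- The order unit space `OU(F)` of a normed space `F`: a copy of `F × ℝ` ordered by the cone
`{(y, μ) : ‖y‖ ≤ μ}`. It is a type synonym so that this order does not compete with the product
order on `F × ℝ`. -/
def OU (F : Type*) : Type _ := F × ℝ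

namespace OU

variable {F : Type*} [NormedAddCommGroup F]

instance : AddCommGroup (OU F) := inferInstanceAs (AddCommGroup (F × ℝ))

instance : PartialOrder (OU F) where
  le a b := ‖b.1 - a.1‖ ≤ b.2 - a.2
  le_refl a := by simp
  le_trans a b c hab hbc := by
    have htri := norm_sub_le_norm_sub_add_norm_sub c.1 b.1 a.1
    linarith
  le_antisymm a b hab hba := by
    have hfst : ‖b.1 - a.1‖ ≤ 0 := by
      linarith [norm_sub_rev b.1 a.1]
    have hsnd : a.2 = b.2 := by
      linarith [norm_nonneg (b.1 - a.1), norm_nonneg (a.1 - b.1)]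
    exact Prod.ext (sub_eq_zero.mp (norm_le_zero_iff.mp hfst)).symm hsnd

variable [NormedSpace ℝ F]

instance : Module ℝ (OU F) := inferInstanceAs (Module ℝ (F × ℝ))

/-- The identity `OU(F) = F × ℝ` as a linear equivalence, used to move between the two types. -/
def toProd : OU F ≃ₗ[ℝ] F × ℝ := LinearEquiv.refl ℝ (F × ℝ)

theorem le_iff {a b : OU F} :
    a ≤ b ↔ ‖(toProd b).1 - (toProd a).1‖ ≤ (toProd b).2 - (toProd a).2 :=
  Iff.rfl

instance : IsOrderedAddMonoid (OU F) where
  add_le_add_left a b hab c := by simpa [le_iff] using hab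

theorem nonneg_iff {a : OU F} : 0 ≤ a ↔ ‖(toProd a).1‖ ≤ (toProd a).2 := by
  simp [le_iff]

theorem toProd_snd_mono : Monotone fun a : OU F ↦ (toProd a).2 := fun _ _ hab ↦
  sub_nonneg.mp ((norm_nonneg _).trans (le_iff.mp hab))

/-- The order unit `(0, 1)` of `OU(F)`. -/
def unit : OU F := toProd.symm (0, 1)

@[simp]
theorem toProd_unit : toProd (unit : OU F) = (0, 1) := rfl

theorem smul_unit_mono : Monotone fun r : ℝ ↦ r • (unit : OU F) := fun r s hrs ↦ by
  simpa [le_iff] using hrs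

theorem le_add_smul_unit {a c : OU F} (hac : a ≤ c) :
    c ≤ a + (2 * ((toProd c).2 - (toProd a).2)) • unit := by
  rw [le_iff] at hac ⊢
  simp only [map_add, map_smul, toProd_unit, Prod.fst_add, Prod.snd_add, Prod.smul_fst,
    Prod.smul_snd, smul_zero, add_zero, smul_eq_mul, mul_one]
  rw [norm_sub_rev]
  linarith

theorem exists_le_add_smul_unit_of_isLUB {D : Set (OU F)} (hne : D.Nonempty)
    (hdir : DirectedOn (· ≤ ·) D) {s : OU F} (hs : IsLUB D s) {ε : ℝ} (hε : 0 < ε) :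
    ∃ a ∈ D, s ≤ a + ε • unit := by
  have hlub := isLUB_csSup (hne.image fun a ↦ (toProd a).2)
    (toProd_snd_mono.map_bddAbove hs.bddAbove)
  obtain ⟨_, ⟨a, ha, rfl⟩, hlt, -⟩ := hlub.exists_between_sub_self (half_pos hε)
  refine ⟨a, ha, hs.2 fun d hd ↦ ?_⟩
  obtain ⟨c, hc, hac, hdc⟩ := hdir a ha d hd
  have hgap : 2 * ((toProd c).2 - (toProd a).2) ≤ ε := by
    linarith [hlub.1 (Set.mem_image_of_mem _ hc)]
  calc
    d ≤ c := hdc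
    _ ≤ a + (2 * ((toProd c).2 - (toProd a).2)) • unit := le_add_smul_unit hac
    _ ≤ a + ε • unit := by gcongr; exact smul_unit_mono hgap

theorem scottContinuous_of_positive (φ : OU F →ₚ[ℝ] ℝ) : ScottContinuous φ := by
  intro D hne hdir s hs
  refine ⟨φ.monotone'.mem_upperBounds_image hs.1, fun r hr ↦
    le_of_forall_pos_le_add fun δ hδ ↦ ?_⟩
  obtain ⟨ε, hε, hεδ⟩ := exists_pos_mul_lt hδ (φ unit)
  obtain ⟨a, ha, hsa⟩ := exists_le_add_smul_unit_of_isLUB hne hdir hs hε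
  calc
    φ s ≤ φ (a + ε • unit) := φ.monotone' hsa
    _ = φ a + φ unit * ε := by rw [map_add, map_smul, smul_eq_mul, mul_comm]
    _ ≤ r + δ := add_le_add (hr (Set.mem_image_of_mem φ ha)) hεδ.le

/-- The state `(y, μ) ↦ ψ y + μ` on `OU(F)` given by a functional `ψ` in the dual unit ball. -/
def ofFunctional (ψ : StrongDual ℝ F) (hψ : ‖ψ‖ ≤ 1) : OU F →ₚ[ℝ] ℝ :=
  .mk₀ ((ψ.toLinearMap.coprod LinearMap.id) ∘ₗ toProd.toLinearMap) fun a ha ↦ by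
    have hbound : |ψ (toProd a).1| ≤ (toProd a).2 :=
      (ψ.le_of_opNorm_le_of_le hψ (nonneg_iff.mp ha)).trans_eq (one_mul _)
    exact neg_le_iff_add_nonneg.mp (neg_le_of_abs_le hbound)

@[simp]
theorem ofFunctional_apply (ψ : StrongDual ℝ F) (hψ : ‖ψ‖ ≤ 1) (a : OU F) :
    ofFunctional ψ hψ a = ψ (toProd a).1 + (toProd a).2 :=
  rfl

end OU

theorem exists_norm_le_one_notMem {𝕜 G : Type*} [NontriviallyNormedField 𝕜]
    [SeminormedAddCommGroup G] [NormedSpace 𝕜 G] {p : Submodule 𝕜 G} (hp : p ≠ ⊤) :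
    ∃ x ∉ p, ‖x‖ ≤ 1 := by
  by_contra! hball
  have hsub : Metric.ball (0 : G) 1 ⊆ p := fun x hx ↦ by
    by_contra hxp
    exact (hball x hxp).not_gt (mem_ball_zero_iff.mp hx)
  exact hp (p.eq_top_of_nonempty_interior'
    ⟨0, interior_maximal hsub Metric.isOpen_ball (Metric.mem_ball_self one_pos)⟩)

theorem stmt_18_general {E : Type*} [NormedAddCommGroup E] [NormedSpace ℝ E]
    (hnonrefl : ¬ Function.Surjective (NormedSpace.inclusionInDoubleDual ℝ E)) :
    ∃ φ : ((E →L[ℝ] ℝ) × ℝ) →ₗ[ℝ] ℝ,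
      (∀ a : (E →L[ℝ] ℝ) × ℝ, ‖a.1‖ ≤ a.2 → 0 ≤ φ a) ∧
      (φ ((0 : E →L[ℝ] ℝ), (1 : ℝ)) = 1) ∧
      (∀ D : Set ((E →L[ℝ] ℝ) × ℝ), D.Nonempty →
        (∀ a ∈ D, ∀ b ∈ D, ∃ c ∈ D, OUle a c ∧ OUle b c) →
        ∀ s : (E →L[ℝ] ℝ) × ℝ, (∀ a ∈ D, OUle a s) →
          (∀ b : (E →L[ℝ] ℝ) × ℝ, (∀ a ∈ D, OUle a b) → OUle s b) →
          sSup (φ '' D) = φ s) ∧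
      (∀ (x : E) (l : ℝ), ∃ p : (E →L[ℝ] ℝ) × ℝ, φ p ≠ p.1 x + l * p.2) := by
  have hrange : (NormedSpace.inclusionInDoubleDual ℝ E).range ≠ ⊤ := fun h ↦
    hnonrefl (LinearMap.range_eq_top.mp h)
  obtain ⟨ψ, hψ_range, hψ⟩ := exists_norm_le_one_notMem
    (𝕜 := ℝ) (G := StrongDual ℝ (StrongDual ℝ E)) hrange
  let φ := OU.ofFunctional ψ hψ
  refine ⟨φ.toLinearMap ∘ₗ OU.toProd.symm.toLinearMap,
    fun a ha ↦ map_nonneg φ (OU.nonneg_iff.mpr ha), by simp [φ],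
    fun D hne hdir s hub hleast ↦ ?_, fun x l ↦ ?_⟩
  · have hlub := OU.scottContinuous_of_positive φ hne hdir ⟨hub, hleast⟩
    exact hlub.csSup_eq (hne.image φ)
  · by_contra! heval
    have hψ_eval : NormedSpace.inclusionInDoubleDual ℝ E x = ψ := by
      ext y
      simpa [φ] using (heval (y, 0)).symm
    exact hψ_range ⟨x, hψ_eval⟩

/-- For a non-reflexive Banach space `E`, there is a Scott-continuous state on
`OU(E*) = E* × ℝ` (ordered by the cone `{(y,μ) : ‖y‖ ≤ μ}`, with unit `(0,1)`) that
is not of the form `ev(x,λ) ∘ lev` for any `(x,λ) ∈ E × ℝ`, where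
`(ev(x,λ) ∘ lev)(y,μ) = y(x) + λμ`. -/
theorem stmt_18 {E : Type*} [NormedAddCommGroup E] [NormedSpace ℝ E] [CompleteSpace E]
    (hnonrefl : ¬ Function.Surjective (NormedSpace.inclusionInDoubleDual ℝ E)) :
    ∃ φ : ((E →L[ℝ] ℝ) × ℝ) →ₗ[ℝ] ℝ,
      (∀ a : (E →L[ℝ] ℝ) × ℝ, ‖a.1‖ ≤ a.2 → 0 ≤ φ a) ∧
      (φ ((0 : E →L[ℝ] ℝ), (1 : ℝ)) = 1) ∧
      (∀ D : Set ((E →L[ℝ] ℝ) × ℝ), D.Nonempty →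
        (∀ a ∈ D, ∀ b ∈ D, ∃ c ∈ D, OUle a c ∧ OUle b c) →
        ∀ s : (E →L[ℝ] ℝ) × ℝ, (∀ a ∈ D, OUle a s) →
          (∀ b : (E →L[ℝ] ℝ) × ℝ, (∀ a ∈ D, OUle a b) → OUle s b) →
          sSup (φ '' D) = φ s) ∧
      (∀ (x : E) (l : ℝ), ∃ p : (E →L[ℝ] ℝ) × ℝ, φ p ≠ p.1 x + l * p.2) :=
  stmt_18_general hnonrefl
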